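/- (Definability of ⟹ from ⊞ over downward-monotone models) Let M be a downward-monotone in-model (i.e., every nonempty subset of a neighborhood is itself a neighborhood of the same world) and w a world in M. Then for any formulas φ, ψ of L_⟹: M,w ⊨ φ⟹ψ if and only if M,w ⊨ ⊞(φ→ψ). -/

import Mathlib

/-- Formulas of the inquisitive modal language `L_⟹`. -/
inductive Form (P : Type) : Type
  | atom : P → Form P
  | bot : Form P
  | and : Form P → Form P → Form P
  | impl : Form P → Form P → Form P
  | idisj : Form P → Form P → Form P
  | yields : Form P → Form P → Form P

/-- An inhabited neighborhood model (in-model). -/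
structure InModel (P : Type) where
  W : Type
  ne : Nonempty W
  Nb : W → Set (Set W)
  nb_nonempty : ∀ w, ∀ s ∈ Nb w, s.Nonempty
  V : W → P → Bool

/-- Support of a formula at an information state. -/
def support {P : Type} (M : InModel P) : Form P → Set M.W → Prop
  | .atom p, s => ∀ w ∈ s, M.V w p = true
  | .bot, s => s = ∅
  | .and φ ψ, s => support M φ s ∧ support M ψ s
  | .impl φ ψ, s => ∀ t : Set M.W, t ⊆ s → support M φ t → support M ψ t
  | .idisj φ ψ, s => support M φ s ∨ support M ψ s
  | .yields φ ψ, s => ∀ w ∈ s, ∀ t ∈ M.Nb w, support M φ t → support M ψ t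

/-- Truth at a world: support at the corresponding singleton state. -/
def truth {P : Type} (M : InModel P) (w : M.W) (φ : Form P) : Prop :=
  support M φ {w}

/-- A formula is truth-conditional if support at any state amounts to truth at
every world of the state. -/
def TruthConditional {P : Type} (φ : Form P) : Prop :=
  ∀ (M : InModel P) (s : Set M.W), support M φ s ↔ ∀ w ∈ s, truth M w φ

/-- Logical equivalence: same supporting states in every in-model. -/
def EquivF {P : Type} (φ ψ : Form P) : Prop :=
  ∀ (M : InModel P) (s : Set M.W), support M φ s ↔ support M ψ s

def Form.neg {P : Type} (φ : Form P) : Form P := .impl φ .bot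
def Form.top {P : Type} : Form P := Form.neg .bot
def Form.or {P : Type} (φ ψ : Form P) : Form P := Form.neg (.and (Form.neg φ) (Form.neg ψ))
def Form.box {P : Type} (φ : Form P) : Form P := .yields Form.top φ
def Form.dia {P : Type} (φ : Form P) : Form P := Form.neg (.yields φ .bot)
def Form.quest {P : Type} (φ : Form P) : Form P := .idisj φ (Form.neg φ)

/-- Declaratives: formulas where `⩔` occurs only within the scope of `⟹`. -/
inductive IsDecl {P : Type} : Form P → Prop
  | atom (p : P) : IsDecl (.atom p)
  | bot : IsDecl .bot
  | and {α β : Form P} : IsDecl α → IsDecl β → IsDecl (.and α β)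
  | impl {α β : Form P} : IsDecl α → IsDecl β → IsDecl (.impl α β)
  | yields (φ ψ : Form P) : IsDecl (.yields φ ψ)

/-- A model is downward-monotone if every nonempty subset of a neighborhood is
itself a neighborhood of the same world. -/
def DownwardMonotone {P : Type} (M : InModel P) : Prop :=
  ∀ w : M.W, ∀ s ∈ M.Nb w, ∀ t : Set M.W, t ⊆ s → t.Nonempty → t ∈ M.Nb w

/-!
`⊞(φ → ψ)` asks `φ → ψ` of every neighborhood, that is, it tests `φ ⟹ ψ` on all subsets of
neighborhoods. Downward monotonicity makes the nonempty ones among these neighborhoods themselves,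
and the empty state is harmless because it supports every formula.
-/

/-- The local form of `DownwardMonotone`: the neighborhoods of the single world `w` are closed under
nonempty subsets. -/
def DownwardMonotoneAt {P : Type} (M : InModel P) (w : M.W) : Prop :=
  ∀ s ∈ M.Nb w, ∀ t : Set M.W, t ⊆ s → t.Nonempty → t ∈ M.Nb w

section Support

variable {P : Type} (M : InModel P)

theorem support_empty (φ : Form P) : support M φ ∅ := by
  induction φ with
  | atom p => simp [support]
  | bot => rfl
  | and φ ψ hφ hψ => exact ⟨hφ, hψ⟩
  | impl φ ψ _ hψ =>
    intro t ht _
    rwa [Set.subset_empty_iff.mp ht]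
  | idisj φ ψ hφ _ => exact Or.inl hφ
  | yields φ ψ _ _ => simp [support]

theorem support_top (s : Set M.W) : support M Form.top s :=
  fun _ _ hbot => hbot

theorem support_box_iff {φ : Form P} {s : Set M.W} :
    support M (Form.box φ) s ↔ ∀ w ∈ s, ∀ t ∈ M.Nb w, support M φ t :=
  ⟨fun h w hw t ht => h w hw t ht (support_top M t), fun h w hw t ht _ => h w hw t ht⟩

variable {M} {s : Set M.W} {φ ψ : Form P}

theorem support_yields_of_support_box_impl (h : support M (Form.box (.impl φ ψ)) s) :
    support M (.yields φ ψ) s :=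
  fun w hw t ht hφ => (support_box_iff M).mp h w hw t ht t subset_rfl hφ

theorem support_box_impl_of_support_yields (hM : ∀ w ∈ s, DownwardMonotoneAt M w)
    (h : support M (.yields φ ψ) s) : support M (Form.box (.impl φ ψ)) s := by
  refine (support_box_iff M).mpr fun w hw t ht u hut hφ => ?_
  obtain rfl | hu := u.eq_empty_or_nonempty
  · exact support_empty M ψ
  · exact h w hw u (hM w hw t ht u hut hu) hφ

end Support

theorem yields_definable_from_box_general {P : Type} (M : InModel P) (s : Set M.W)
    (hM : ∀ w ∈ s, DownwardMonotoneAt M w) (φ ψ : Form P) :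
    support M (.yields φ ψ) s ↔ support M (Form.box (.impl φ ψ)) s :=
  ⟨support_box_impl_of_support_yields hM, support_yields_of_support_box_impl⟩

/-- over downward-monotone models, `⟹` is definable from `⊞`. -/
theorem yields_definable_from_box {P : Type} (M : InModel P)
    (hM : DownwardMonotone M) (w : M.W) (φ ψ : Form P) :
    truth M w (.yields φ ψ) ↔ truth M w (Form.box (.impl φ ψ)) :=
  yields_definable_from_box_general M {w} (fun v _ => hM v) φ ψ
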